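/- (Proposition 2) Fix vehicle length l > 0, uncertainty parameter σₒ > 0, positive constants T, L, τ, and a capacity requirement ŝ > 0. Let 0 < v₁ < v₂ and suppose η₁ and η₂ are the greatest elements of the feasible sets {η > 0 : s(v₁,η) ≥ ŝ} and {η > 0 : s(v₂,η) ≥ ŝ}, respectively, with the constraint binding at both, i.e. s(v₁,η₁) = s(v₂,η₂) = ŝ. Then η₁ < η₂ and the minimized collision probability strictly decreases with speed: p(v₂,η₂) < p(v₁,η₁). -/

import Mathlib

open MeasureTheory Real Filter Set

/-- The standard Gaussian probability density function. -/
noncomputable def stdGaussianPDF (x : ℝ) : ℝ :=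
  (Real.sqrt (2 * Real.pi))⁻¹ * Real.exp (-x ^ 2 / 2)

/-- The standard Gaussian cumulative distribution function Φ. -/
noncomputable def stdGaussianCDF (x : ℝ) : ℝ :=
  ∫ t in Set.Iic x, stdGaussianPDF t

/-- The per-time-step collision probability p(v,η) = Φ((l − v·η)/(v·σₒ·√η)). -/
noncomputable def collisionProb (l σₒ v η : ℝ) : ℝ :=
  stdGaussianCDF ((l - v * η) / (v * σₒ * Real.sqrt η))

/-- The collision-inclusive capacity s(v,η) = 1/(η + (T·L)/(τ·v)·p(v,η)). -/
noncomputable def cic (l σₒ T L τ v η : ℝ) : ℝ :=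
  1 / (η + (T * L) / (τ * v) * collisionProb l σₒ v η)

/-!
The argument `(l - vη) / (vσ√η)` of `Φ` equals `l / (vσ√η) - √η / σ`, which decreases in both the
speed and the headway. Since moreover `Φ > 0`, the factor `1 / v` makes the capacity strictly
increasing in speed, so a headway feasible at `v₁` satisfies the constraint at `v₂` with room to
spare. By continuity a slightly larger headway is then still feasible at `v₂`.
-/

open scoped Topology

theorem strictMono_integral_Iic {f : ℝ → ℝ} (hf : Integrable f) (hpos : ∀ x, 0 < f x) :
    StrictMono fun x => ∫ t in Iic x, f t := by
  intro a b hab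
  rw [← sub_pos, intervalIntegral.integral_Iic_sub_Iic hf.integrableOn hf.integrableOn]
  exact intervalIntegral.intervalIntegral_pos_of_pos hf.intervalIntegrable hpos hab

theorem continuous_integral_Iic {E : Type*} [NormedAddCommGroup E] [NormedSpace ℝ E]
    {μ : Measure ℝ} [NullSingletonClass μ] {f : ℝ → E} (hf : Integrable f μ) :
    Continuous fun x => ∫ t in Iic x, f t ∂μ :=
  continuous_iff_continuousAt.2 fun x =>
    hf.integrableOn.continuousOn_Iic_primitive_Iic.continuousAt
      (Iic_mem_nhds (lt_add_one x))

theorem stdGaussianPDF_eq_gaussianPDFReal :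
    stdGaussianPDF = ProbabilityTheory.gaussianPDFReal 0 1 := by
  ext x
  simp [stdGaussianPDF, ProbabilityTheory.gaussianPDFReal]

theorem stdGaussianPDF_pos (x : ℝ) : 0 < stdGaussianPDF x := by
  rw [stdGaussianPDF_eq_gaussianPDFReal]
  exact ProbabilityTheory.gaussianPDFReal_pos 0 1 x one_ne_zero

theorem integrable_stdGaussianPDF : Integrable stdGaussianPDF := by
  rw [stdGaussianPDF_eq_gaussianPDFReal]
  exact ProbabilityTheory.integrable_gaussianPDFReal 0 1

theorem stdGaussianCDF_strictMono : StrictMono stdGaussianCDF :=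
  strictMono_integral_Iic integrable_stdGaussianPDF stdGaussianPDF_pos

theorem continuous_stdGaussianCDF : Continuous stdGaussianCDF :=
  continuous_integral_Iic integrable_stdGaussianPDF

theorem stdGaussianCDF_pos (x : ℝ) : 0 < stdGaussianCDF x :=
  calc
    0 ≤ stdGaussianCDF (x - 1) := integral_nonneg fun t => (stdGaussianPDF_pos t).le
    _ < stdGaussianCDF x := stdGaussianCDF_strictMono (sub_one_lt x)

section CollisionProb

variable {l σ v η : ℝ}

theorem collisionProb_pos : 0 < collisionProb l σ v η :=
  stdGaussianCDF_pos _

theorem collisionProb_eq_stdGaussianCDF_sub (hv : v ≠ 0) :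
    collisionProb l σ v η = stdGaussianCDF (l / (v * σ * √η) - √η / σ) := by
  rw [collisionProb, sub_div, mul_assoc v, mul_div_mul_left _ _ hv, div_mul_eq_div_div_swap η,
    div_sqrt]

theorem collisionProb_strictAntiOn_headway (hl : 0 ≤ l) (hσ : 0 < σ) (hv : 0 < v) :
    StrictAntiOn (collisionProb l σ v) (Ioi 0) := by
  intro η (hη : 0 < η) θ _ hηθ
  rw [collisionProb_eq_stdGaussianCDF_sub hv.ne', collisionProb_eq_stdGaussianCDF_sub hv.ne']
  have hsqrt : √η < √θ := sqrt_lt_sqrt hη.le hηθ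
  have hlength : l / (v * σ * √θ) ≤ l / (v * σ * √η) := by gcongr
  have hdrift : √η / σ < √θ / σ := by gcongr
  exact stdGaussianCDF_strictMono (by linarith)

theorem collisionProb_antitoneOn_speed (hl : 0 ≤ l) (hσ : 0 < σ) (hη : 0 < η) :
    AntitoneOn (fun v => collisionProb l σ v η) (Ioi 0) := by
  intro v (hv : 0 < v) w (hw : 0 < w) hvw
  simp only [collisionProb_eq_stdGaussianCDF_sub hv.ne',
    collisionProb_eq_stdGaussianCDF_sub hw.ne']
  apply stdGaussianCDF_strictMono.monotone
  gcongr

theorem continuousAt_collisionProb (hσ : σ ≠ 0) (hv : v ≠ 0) (hη : 0 < η) :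
    ContinuousAt (collisionProb l σ v) η := by
  have hden : v * σ * √η ≠ 0 := mul_ne_zero (mul_ne_zero hv hσ) (sqrt_ne_zero'.2 hη)
  exact continuous_stdGaussianCDF.continuousAt.comp (by fun_prop (disch := exact hden))

end CollisionProb

section Capacity

variable {l σ T L τ v η : ℝ}

theorem cic_strictMonoOn_speed (hl : 0 ≤ l) (hσ : 0 < σ) (hT : 0 < T) (hL : 0 < L) (hτ : 0 < τ)
    (hη : 0 < η) : StrictMonoOn (fun v => cic l σ T L τ v η) (Ioi 0) := by
  intro v (hv : 0 < v) w (hw : 0 < w) hvw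
  have hprob_pos : 0 < collisionProb l σ w η := collisionProb_pos
  have hprob_le : collisionProb l σ w η ≤ collisionProb l σ v η :=
    collisionProb_antitoneOn_speed hl hσ hη hv hw hvw.le
  have hdelay : T * L / (τ * w) * collisionProb l σ w η <
      T * L / (τ * v) * collisionProb l σ v η :=
    calc
      _ < T * L / (τ * v) * collisionProb l σ w η := by gcongr
      _ ≤ T * L / (τ * v) * collisionProb l σ v η := by gcongr
  exact one_div_lt_one_div_of_lt (by positivity) (add_lt_add_right hdelay η)

theorem continuousAt_cic (hσ : σ ≠ 0) (hT : 0 ≤ T) (hL : 0 ≤ L) (hτ : 0 ≤ τ) (hv : 0 < v)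
    (hη : 0 < η) : ContinuousAt (cic l σ T L τ v) η := by
  have hprob_pos : 0 < collisionProb l σ v η := collisionProb_pos
  have hden : η + T * L / (τ * v) * collisionProb l σ v η ≠ 0 := by positivity
  have hprob : ContinuousAt (collisionProb l σ v) η := continuousAt_collisionProb hσ hv.ne' hη
  exact continuousAt_const.div (continuousAt_id.add (continuousAt_const.mul hprob)) hden

end Capacity

theorem minimized_collisionProb_decreases_with_speed_general {l σₒ T L τ shat v₁ v₂ η₁ η₂ : ℝ}
    (hl : 0 ≤ l) (hσ : 0 < σₒ) (hT : 0 < T) (hL : 0 < L) (hτ : 0 < τ)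
    (hv₁ : 0 < v₁) (hv : v₁ < v₂) (hη₁ : 0 < η₁)
    (hfeas₁ : shat ≤ cic l σₒ T L τ v₁ η₁)
    (hmax₂ : ∀ η, 0 < η → shat ≤ cic l σₒ T L τ v₂ η → η ≤ η₂) :
    η₁ < η₂ ∧ collisionProb l σₒ v₂ η₂ < collisionProb l σₒ v₁ η₁ := by
  have hv₂ : 0 < v₂ := hv₁.trans hv
  have hslack : shat < cic l σₒ T L τ v₂ η₁ :=
    hfeas₁.trans_lt (cic_strictMonoOn_speed hl hσ hT hL hτ hη₁ hv₁ hv₂ hv)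
  have hfeas_near : ∀ᶠ η in 𝓝[>] η₁, shat < cic l σₒ T L τ v₂ η :=
    ((continuousAt_cic hσ.ne' hT.le hL.le hτ.le hv₂ hη₁).eventually_const_lt
      hslack).filter_mono nhdsWithin_le_nhds
  obtain ⟨η, hfeas, hlt : η₁ < η⟩ := (hfeas_near.and self_mem_nhdsWithin).exists
  have hη₁₂ : η₁ < η₂ := hlt.trans_le (hmax₂ η (hη₁.trans hlt) hfeas.le)
  refine ⟨hη₁₂, ?_⟩
  calc
    collisionProb l σₒ v₂ η₂ < collisionProb l σₒ v₂ η₁ :=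
      collisionProb_strictAntiOn_headway hl hσ hv₂ hη₁ (hη₁.trans hη₁₂) hη₁₂
    _ ≤ collisionProb l σₒ v₁ η₁ := collisionProb_antitoneOn_speed hl hσ hη₁ hv₁ hv₂ hv.le

/-- Proposition 2: if 0 < v₁ < v₂ and η₁, η₂ are the greatest
elements of the feasible sets {η > 0 : s(vᵢ,η) ≥ ŝ}, with the capacity
constraint binding at both, then η₁ < η₂ and p(v₂,η₂) < p(v₁,η₁). -/
theorem minimized_collisionProb_decreases_with_speed (l σₒ T L τ shat v₁ v₂ η₁ η₂ : ℝ)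
    (hl : 0 < l) (hσ : 0 < σₒ) (hT : 0 < T) (hL : 0 < L) (hτ : 0 < τ)
    (hshat : 0 < shat) (hv₁ : 0 < v₁) (hv : v₁ < v₂)
    (hη₁ : 0 < η₁) (hη₂ : 0 < η₂)
    (hmax₁ : ∀ η, 0 < η → shat ≤ cic l σₒ T L τ v₁ η → η ≤ η₁)
    (hmax₂ : ∀ η, 0 < η → shat ≤ cic l σₒ T L τ v₂ η → η ≤ η₂)
    (hbind₁ : cic l σₒ T L τ v₁ η₁ = shat)
    (hbind₂ : cic l σₒ T L τ v₂ η₂ = shat) :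
    η₁ < η₂ ∧ collisionProb l σₒ v₂ η₂ < collisionProb l σₒ v₁ η₁ :=
  minimized_collisionProb_decreases_with_speed_general hl.le hσ hT hL hτ hv₁ hv hη₁ hbind₁.ge hmax₂
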